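/- Let L' = ℤ[a_i : i ∈ ℤ] be the polynomial ring over ℤ in a family of indeterminates indexed by ℤ and let K' be its fraction field. Suppose t : ℤ × ℕ → K' satisfies t_{i,0} = 1 and t_{i,1} = a_i for all i ∈ ℤ, and the recurrence t_{i,n} · t_{i+1,n} = t_{i,n+1} · t_{i+1,n-1} + 1 for all i ∈ ℤ and n ≥ 1. Then for every i ∈ ℤ and n ≥ 1, t_{i,n} equals the determinant of the n×n tridiagonal matrix whose diagonal entries, from top-left to bottom-right, are a_{i+n-1}, a_{i+n-2}, …, a_i, whose superdiagonal entries are all 1, and whose subdiagonal entries are all 1. -/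

import Mathlib

/-- The `n × n` tridiagonal matrix whose diagonal entries, from top-left to bottom-right,
are `x (i+n-1), x (i+n-2), …, x i`, whose superdiagonal entries are all `1`, and whose
subdiagonal entries, from top to bottom, are `q (i+n-1), …, q (i+1)`. -/
def triMat {R : Type*} [CommRing R] (q x : ℤ → R) (i : ℤ) (n : ℕ) :
    Matrix (Fin n) (Fin n) R :=
  Matrix.of fun j k =>
    if (j : ℕ) = (k : ℕ) then x (i + (n : ℤ) - 1 - (j : ℕ))
    else if (j : ℕ) + 1 = (k : ℕ) then 1
    else if (k : ℕ) + 1 = (j : ℕ) then q (i + (n : ℤ) - 1 - (k : ℕ))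
    else 0

/-- The tridiagonal determinant `D_{i,n}(q,x)`; by convention `D_{i,0}(q,x) = 1`. -/
def triDet {R : Type*} [CommRing R] (q x : ℤ → R) (i : ℤ) (n : ℕ) : R :=
  (triMat q x i n).det

/-- The polynomial ring `L' = ℤ[a_i : i ∈ ℤ]`. -/
abbrev L' := MvPolynomial ℤ ℤ

/-- The fraction field `K'` of `L'`. -/
abbrev K' := FractionRing L'

/-- The indeterminate `a_i`. -/
noncomputable def avar (i : ℤ) : L' := MvPolynomial.X i

theorem triDet_zero' {R : Type*} [CommRing R] (q x : ℤ → R) (i : ℤ) : triDet q x i 0 = 1 := by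
  simp [triDet]

theorem triDet_one' {R : Type*} [CommRing R] (q x : ℤ → R) (i : ℤ) : triDet q x i 1 = x i := by
  simp [triDet, triMat]

theorem triMat_sub {R : Type*} [CommRing R] (q x : ℤ → R) (i : ℤ) (n : ℕ) :
    (triMat q x i (n + 1)).submatrix Fin.succ Fin.succ = triMat q x i n := by
  ext j k
  have e : ∀ m : ℕ, i + ((n + 1 : ℕ) : ℤ) - 1 - ((m + 1 : ℕ) : ℤ) = i + (n : ℤ) - 1 - (m : ℤ) := by
    intro m; push_cast; ring
  simp only [triMat, Matrix.submatrix_apply, Matrix.of_apply, Fin.val_succ, e, add_left_inj]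

theorem triDet_rec {R : Type*} [CommRing R] (x : ℤ → R) (i : ℤ) (n : ℕ) :
    triDet (fun _ => 1) x i (n + 2) =
      x (i + n + 1) * triDet (fun _ => 1) x i (n + 1) - triDet (fun _ => 1) x i n := by
  have hminor : ((triMat (fun _ => 1) x i (n + 2)).submatrix Fin.succ
      (Fin.succAbove (Fin.succ 0))).det = triDet (fun _ => 1) x i n := by
    rw [Matrix.det_succ_column_zero, Fin.sum_univ_succ, Finset.sum_eq_zero]
    · have hs : (((triMat (fun _ => 1) x i (n + 2)).submatrix Fin.succ
          (Fin.succAbove (Fin.succ 0))).submatrix (Fin.succAbove 0) Fin.succ)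
          = triMat (fun _ => 1) x i n := by
        rw [← triMat_sub (fun _ => 1) x i n, ← triMat_sub (fun _ => 1) x i (n + 1)]
        ext j k
        simp [Fin.succ_succAbove_succ]
      rw [hs]
      simp [triMat, triDet]
    · intro j _
      simp [triMat]
  unfold triDet
  rw [Matrix.det_succ_row_zero, Fin.sum_univ_succ, Fin.sum_univ_succ, Finset.sum_eq_zero, hminor]
  · have e : i + ((n : ℤ) + 2) - 1 = i + n + 1 := by ring
    have h0 : (Fin.succAbove (0 : Fin (n + 2))) = Fin.succ := by
      ext j; simp
    rw [h0, triMat_sub]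
    simp [triMat, triDet, e]
    ring
  · intro j _
    simp [triMat]

theorem triDet_freeze {R : Type*} [CommRing R] (x : ℤ → R) (i : ℤ) (n : ℕ) :
    triDet (fun _ => 1) x i (n + 1) * triDet (fun _ => 1) x (i + 1) (n + 1) =
      triDet (fun _ => 1) x i (n + 2) * triDet (fun _ => 1) x (i + 1) n + 1 := by
  induction n with
  | zero =>
    rw [triDet_rec]
    simp only [zero_add, triDet_zero', triDet_one', Nat.cast_zero, add_zero]
    ring
  | succ n ih =>
    have a := triDet_rec x i (n + 1)
    have b := triDet_rec x (i + 1) n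
    have e : i + ((n + 1 : ℕ) : ℤ) + 1 = i + 1 + n + 1 := by push_cast; ring
    rw [e] at a
    rw [show n + 1 + 2 = n + 1 + 2 from rfl, a, show n + 1 + 1 = n + 2 from rfl, b]
    linear_combination ih

theorem triDet_eval (i : ℤ) (n : ℕ) :
    MvPolynomial.eval (fun _ => (2 : ℤ)) (triDet (fun _ => 1) avar i n) = n + 1 := by
  induction n using Nat.twoStepInduction with
  | zero => simp [triDet_zero']
  | one => simp [triDet_one', avar]
  | more n h1 h2 =>
    rw [triDet_rec, map_sub, map_mul, h1, h2]
    simp [avar]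
    ring

theorem triDet_ne (i : ℤ) (n : ℕ) :
    algebraMap L' K' (triDet (fun _ => 1) avar i n) ≠ 0 := by
  intro h
  have h' := (IsFractionRing.to_map_eq_zero_iff (R := L') (K := K')).1 h
  have := triDet_eval i n
  rw [h', map_zero] at this
  omega

/-- Lemma 4.6: if `t : ℤ × ℕ → K'` satisfies `t_{i,0} = 1`, `t_{i,1} = a_i` and the
recurrence `t_{i,n} t_{i+1,n} = t_{i,n+1} t_{i+1,n-1} + 1` for `n ≥ 1`, then `t_{i,n}`
is the tridiagonal determinant with diagonal `a_{i+n-1}, …, a_i`, superdiagonal `1`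
and subdiagonal `1`. -/
theorem generalized_chebyshev_det (t : ℤ × ℕ → K')
    (h0 : ∀ i : ℤ, t (i, 0) = 1)
    (h1 : ∀ i : ℤ, t (i, 1) = algebraMap L' K' (avar i))
    (hrec : ∀ (i : ℤ) (n : ℕ), 1 ≤ n →
      t (i, n) * t (i + 1, n) = t (i, n + 1) * t (i + 1, n - 1) + 1) :
    ∀ (i : ℤ) (n : ℕ), 1 ≤ n →
      t (i, n) = algebraMap L' K' (triDet (fun _ => 1) avar i n) := by
  have key : ∀ (n : ℕ) (i : ℤ), t (i, n) = algebraMap L' K' (triDet (fun _ => 1) avar i n) := by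
    intro n
    induction n using Nat.twoStepInduction with
    | zero => intro i; rw [h0, triDet_zero', map_one]
    | one => intro i; rw [h1, triDet_one']
    | more n ha hb =>
      intro i
      have h := hrec i (n + 1) (by omega)
      have f := congrArg (algebraMap L' K') (triDet_freeze avar i n)
      rw [map_mul, map_add, map_mul, map_one] at f
      rw [hb, hb, f, Nat.add_sub_cancel, ha] at h
      exact (mul_right_cancel₀ (triDet_ne (i + 1) n) (add_right_cancel h)).symm
  intro i n _
  exact key n i
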